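/- For every c ∈ [nπ/2, (n+1)π/2), the set ℱ_c = {A ∈ Sym(ℝ^{n+1}) : Θ̃(A) ≥ c} is a convex subset of Sym(ℝ^{n+1}). -/

import Mathlib

open Real Filter Matrix

noncomputable section

/-- The Hessian matrix of a function `v : ℝ^m → ℝ` at `x`. -/
def hessianMatrix {m : ℕ} (v : (Fin m → ℝ) → ℝ) (x : Fin m → ℝ) :
    Matrix (Fin m) (Fin m) ℝ :=
  Matrix.of fun i j => iteratedFDeriv ℝ 2 v x ![Pi.single i 1, Pi.single j 1]

/-- The lifted Lagrangian angle θ̃(A) = ∑ arctan λ_j(A) of a real symmetric matrix. -/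
def liftedAngle {m : ℕ} (A : Matrix (Fin m) (Fin m) ℝ) : ℝ :=
  if h : A.IsHermitian then ∑ j, Real.arctan (h.eigenvalues j) else 0

/-- The Harvey–Lawson branches `F_c` of the special Lagrangian subequation. -/
def Fc (m : ℕ) (c : ℝ) : Set (Matrix (Fin m) (Fin m) ℝ) :=
  {A | A.IsSymm ∧ c ≤ liftedAngle A}

/-- `I_n = diag(0,1,…,1)` as a complex `(n+1)×(n+1)` matrix. -/
def Inmat (n : ℕ) : Matrix (Fin (n+1)) (Fin (n+1)) ℂ :=
  Matrix.diagonal fun i => if i = 0 then 0 else 1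

/-- The complex matrix `I_n + i A`. -/
def cmat {n : ℕ} (A : Matrix (Fin (n+1)) (Fin (n+1)) ℝ) :
    Matrix (Fin (n+1)) (Fin (n+1)) ℂ :=
  Inmat n + Complex.I • A.map (fun a => (a : ℂ))

open Classical in
/-- The lifted space-time Lagrangian angle Θ̃, summing `Complex.arg` (with values in
`(-π, π]`) over the roots (with multiplicity) of the characteristic polynomial of
`I_n + i A`, shifted by `π/2` over the singular set `S = {det (I_n + iA) = 0}` where only
the nonzero roots are counted. -/
def spaceTimeAngle {n : ℕ} (A : Matrix (Fin (n+1)) (Fin (n+1)) ℝ) : ℝ :=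
  if (cmat A).det = 0 then
    π / 2 + ((((cmat A).charpoly.roots).filter (fun z => z ≠ 0)).map Complex.arg).sum
  else (((cmat A).charpoly.roots).map Complex.arg).sum

/-- The degenerate special Lagrangian subequation `ℱ_c ⊂ Sym(ℝ^{n+1})`. -/
def calF (n : ℕ) (c : ℝ) : Set (Matrix (Fin (n+1)) (Fin (n+1)) ℝ) :=
  {A | A.IsSymm ∧ c ≤ spaceTimeAngle A}

/-- Interior of a set of symmetric matrices, relative to the symmetric matrices. -/
def symInterior {m : ℕ} (F : Set (Matrix (Fin m) (Fin m) ℝ)) :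
    Set (Matrix (Fin m) (Fin m) ℝ) :=
  {A | A.IsSymm ∧ ∀ᶠ B in nhds A, B.IsSymm → B ∈ F}

/-- The dual subequation `F̃ = (−Int F)ᶜ` (within the symmetric matrices). -/
def dualSub {m : ℕ} (F : Set (Matrix (Fin m) (Fin m) ℝ)) :
    Set (Matrix (Fin m) (Fin m) ℝ) :=
  {A | A.IsSymm ∧ -A ∉ symInterior F}

/-- An `EReal`-valued (i.e. `[−∞,∞)`-valued) function is subaffine on `U` if, for every
affine function `a` and compact `K ⊆ U`, `u ≤ a` on `∂K` implies `u ≤ a` on `K`. -/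
def IsSubaffine {m : ℕ} (U : Set (Fin m → ℝ)) (u : (Fin m → ℝ) → EReal) : Prop :=
  ∀ (a : (Fin m → ℝ) →ᵃ[ℝ] ℝ) (K : Set (Fin m → ℝ)), IsCompact K → K ⊆ U →
    (∀ x ∈ frontier K, u x ≤ (a x : EReal)) → ∀ x ∈ K, u x ≤ (a x : EReal)

/-- `u` is of type `F` on `U` (i.e. `u ∈ F(U)`): `u` is `[−∞,∞)`-valued, upper
semicontinuous on `U`, and `u + v` is subaffine on `U` for every `C²` function `v`
whose Hessian lies in the dual subequation `F̃` at every point of `U`. -/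
def IsTypeF {m : ℕ} (F : Set (Matrix (Fin m) (Fin m) ℝ)) (U : Set (Fin m → ℝ))
    (u : (Fin m → ℝ) → EReal) : Prop :=
  (∀ x ∈ U, u x ≠ ⊤) ∧ UpperSemicontinuousOn u U ∧
    ∀ v : (Fin m → ℝ) → ℝ, ContDiffOn ℝ 2 v U →
      (∀ x ∈ U, hessianMatrix v x ∈ dualSub F) →
      IsSubaffine U (fun x => u x + ((v x : ℝ) : EReal))

/-- The lower-right `n×n` block `A⁺` of an `(n+1)×(n+1)` matrix. -/
def Aplus {n : ℕ} (A : Matrix (Fin (n+1)) (Fin (n+1)) ℝ) : Matrix (Fin n) (Fin n) ℝ :=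
  Matrix.of fun i j => A i.succ j.succ

end

/-!
For a positive definite `D` the angle of `D + iX` is `∑ arctan l_j`, where the `l_j` are the
eigenvalues of `X` relative to `D`. If `X` is positive semidefinite, the diagonal of `Pᴴ X P` in any
`D`-orthonormal frame `P` is a doubly stochastic average of the `l_j`, so by concavity of `arctan`
on `[0, ∞)` the angle is the minimum over `P` of `∑ arctan (Pᴴ X P)_{ii}`, a minimum of concave
functions of `X`.

The degenerate pencil `I_n + iA` is perturbed in its corner, to `(I_n + s² E) + i(A + s E)` with
`E = diag(1,0,…,0)`. If `A ∈ S` then row `0` of `I_n + iA` vanishes, so the perturbation replaces an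
eigenvalue `0` by `s² + is`, whose argument tends to `π/2` as `s → 0⁺`; hence `Θ̃` is the limit of
the angles of the perturbed pencils on all of `Sym(ℝ^{n+1})`. Finally, an angle of at least `nπ/2`
forces every relative eigenvalue to be nonnegative in the limit, which confines `ℱ_c` to the cone
where the concavity applies.
-/

section RootsContinuity

variable {ι K : Type*} [Fintype ι] [DecidableEq ι] [Field K]

open Polynomial Topology

theorem exists_charpoly_eq_prod [IsAlgClosed K] (M : Matrix ι ι K) :
    ∃ r : ι → K, M.charpoly = ∏ i, (X - C (r i)) := by
  classical
  have hcard : Fintype.card ι = Fintype.card M.charpoly.roots.ToType := by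
    rw [Multiset.card_coe, ← (IsAlgClosed.splits _).natDegree_eq_card_roots,
      charpoly_natDegree_eq_dim]
  obtain ⟨e⟩ := Fintype.card_eq.mp hcard
  refine ⟨fun i => (e i).1, ?_⟩
  rw [e.prod_comp (fun z => X - C z.1), Finset.prod_eq_multiset_prod,
    Multiset.map_univ (f := fun z => X - C z)]
  exact (IsAlgClosed.splits _).eq_prod_roots_of_monic (charpoly_monic M)

theorem isClosed_charpoly_eq_prod [Infinite K] [TopologicalSpace K] [IsTopologicalRing K]
    [T2Space K] : IsClosed {p : Matrix ι ι K × (ι → K) | p.1.charpoly = ∏ i, (X - C (p.2 i))} := by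
  have heval : {p : Matrix ι ι K × (ι → K) | p.1.charpoly = ∏ i, (X - C (p.2 i))} =
      ⋂ x : K, {p | (scalar ι x - p.1).det = ∏ i, (x - p.2 i)} := by
    ext p
    simp only [Set.mem_ofPred_eq, Set.mem_iInter]
    refine ⟨fun h x => ?_, fun h => Polynomial.funext fun x => ?_⟩
    · simpa [eval_charpoly, eval_prod] using congrArg (eval x) h
    · simpa [eval_charpoly, eval_prod] using h x
  rw [heval]
  exact isClosed_iInter fun x => isClosed_eq (by fun_prop) (by fun_prop)

open scoped Matrix.Norms.Operator in
theorem exists_eventually_norm_roots_charpoly_le (M₀ : Matrix ι ι ℂ) :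
    ∃ R : ℝ, ∀ᶠ M in 𝓝 M₀, ∀ z ∈ M.charpoly.roots, ‖z‖ ≤ R := by
  refine ⟨(‖M₀‖ + 1) * ‖(1 : Matrix ι ι ℂ)‖, ?_⟩
  have hnorm : ∀ᶠ M : Matrix ι ι ℂ in 𝓝 M₀, ‖M‖ < ‖M₀‖ + 1 :=
    continuous_norm.continuousAt.eventually_lt_const (lt_add_one _)
  filter_upwards [hnorm] with M hM z hz
  have hspec : z ∈ spectrum ℂ M := mem_spectrum_iff_isRoot_charpoly.mpr (isRoot_of_mem_roots hz)
  exact (spectrum.norm_le_norm_mul_of_mem hspec).trans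
    (mul_le_mul_of_nonneg_right hM.le (norm_nonneg _))

theorem roots_charpoly_eq_map_of_eq_prod {M : Matrix ι ι K} {r : ι → K}
    (hr : M.charpoly = ∏ i, (X - C (r i))) :
    M.charpoly.roots = Finset.univ.val.map r := by
  rw [hr, Finset.prod_eq_multiset_prod, ← Function.comp_def (fun z => X - C z) r,
    ← Multiset.map_map, roots_multiset_prod_X_sub_C]

theorem continuousAt_sum_map_roots_charpoly {E : Type*} [AddCommMonoid E] [TopologicalSpace E]
    [ContinuousAdd E] {f : ℂ → E} {M₀ : Matrix ι ι ℂ}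
    (hf : ∀ z ∈ M₀.charpoly.roots, ContinuousAt f z) :
    ContinuousAt (fun M : Matrix ι ι ℂ => (M.charpoly.roots.map f).sum) M₀ := by
  choose r hr using exists_charpoly_eq_prod (ι := ι) (K := ℂ)
  have hroots (M : Matrix ι ι ℂ) := roots_charpoly_eq_map_of_eq_prod (hr M)
  obtain ⟨R, hR⟩ := exists_eventually_norm_roots_charpoly_le M₀
  refine tendsto_iff_ultrafilter _ _ _ |>.mpr fun U hU => ?_
  have hbound : ∀ᶠ M in (U : Filter (Matrix ι ι ℂ)),
      r M ∈ Set.pi Set.univ fun _ : ι => Metric.closedBall (0 : ℂ) R := by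
    filter_upwards [hU hR] with M hM i _
    exact mem_closedBall_zero_iff.mpr (hM _ (by simp [hroots M]))
  obtain ⟨s, -, hs⟩ := (isCompact_univ_pi fun _ : ι => isCompact_closedBall (0 : ℂ) R)
    |>.ultrafilter_le_nhds (U.map r) (le_principal_iff.mpr hbound)
  have hlim : Tendsto r U (𝓝 s) := hs
  have hlim' : Tendsto (fun M => (M, r M)) U (𝓝 (M₀, s)) :=
    (tendsto_id.mono_left hU).prodMk_nhds hlim
  have hclosed := (isClosed_charpoly_eq_prod (ι := ι) (K := ℂ)).mem_of_tendsto hlim'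
  have hroots₀ : M₀.charpoly.roots = Finset.univ.val.map s :=
    roots_charpoly_eq_map_of_eq_prod (hclosed (Eventually.of_forall hr))
  have hsum : Tendsto (fun M => ∑ i, f (r M i)) U (𝓝 (∑ i, f (s i))) :=
    tendsto_finsetSum _ fun i _ =>
      (hf (s i) (by simp [hroots₀])).tendsto.comp (tendsto_pi_nhds.mp hlim i)
  refine (hsum.congr fun M => ?_).trans_eq ?_
  · rw [hroots M, Multiset.map_map]; rfl
  · simp only [hroots₀, Multiset.map_map]; rfl

end RootsContinuity

section SpectralAngle

variable {ι : Type*} [Fintype ι]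

theorem coe_sum_map_arg {s : Multiset ℂ} (hs : (0 : ℂ) ∉ s) :
    (((s.map Complex.arg).sum : ℝ) : Real.Angle) = s.prod.arg := by
  induction s using Multiset.induction_on with
  | empty => simp
  | cons z s ih =>
    have hz : z ≠ 0 := fun h => hs (h ▸ Multiset.mem_cons_self z s)
    have h0 : (0 : ℂ) ∉ s := fun h => hs (Multiset.mem_cons_of_mem h)
    rw [Multiset.map_cons, Multiset.sum_cons, Multiset.prod_cons, Real.Angle.coe_add, ih h0,
      Complex.arg_mul_coe_angle hz (Multiset.prod_ne_zero h0)]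

theorem arg_one_add_mul_I (x : ℝ) : (1 + x * Complex.I).arg = arctan x := by
  rw [Complex.arg_of_re_nonneg (by simp), Real.arctan_eq_arcsin, Complex.norm_def,
    Complex.normSq_apply]
  simp [pow_two]

theorem coe_sum_arctan (l : ι → ℝ) :
    ((∑ i, arctan (l i) : ℝ) : Real.Angle) = (∏ i, (1 + l i * Complex.I)).arg := by
  have hne (x : ℝ) : (1 + x * Complex.I) ≠ 0 := fun h => by simpa using congrArg Complex.re h
  have h := coe_sum_map_arg (s := Finset.univ.val.map fun i => (1 + l i * Complex.I)) <| by
    simpa using fun i => hne (l i)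
  simp only [Multiset.map_map, Function.comp_def, arg_one_add_mul_I] at h
  exact h

variable [DecidableEq ι]

/-- The sum of the principal arguments of the eigenvalues of a complex matrix, counted with
algebraic multiplicity. An eigenvalue `0` contributes `Complex.arg 0 = 0`. -/
noncomputable def spectralAngle (M : Matrix ι ι ℂ) : ℝ :=
  (M.charpoly.roots.map Complex.arg).sum

theorem continuousAt_spectralAngle {M : Matrix ι ι ℂ}
    (hM : ∀ z ∈ M.charpoly.roots, z ∈ Complex.slitPlane) : ContinuousAt spectralAngle M :=
  continuousAt_sum_map_roots_charpoly fun z hz => Complex.continuousAt_arg (hM z hz)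

theorem zero_notMem_roots_charpoly {M : Matrix ι ι ℂ} (hM : M.det ≠ 0) :
    (0 : ℂ) ∉ M.charpoly.roots := fun h0 => hM <| by
  rw [det_eq_prod_roots_charpoly, Multiset.prod_eq_zero h0]

theorem coe_spectralAngle {M : Matrix ι ι ℂ} (hM : M.det ≠ 0) :
    (spectralAngle M : Real.Angle) = M.det.arg := by
  rw [det_eq_prod_roots_charpoly]
  exact coe_sum_map_arg (zero_notMem_roots_charpoly hM)

end SpectralAngle

section PosSemidef

open scoped ComplexOrder Topology

variable {ι 𝕜 R : Type*} [RCLike 𝕜]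

theorem convex_setOf_posSemidef : Convex ℝ {X : Matrix ι ι 𝕜 | X.PosSemidef} :=
  fun _ hX _ hY _ _ ha hb _ => (PosSemidef.smul hX ha).add (PosSemidef.smul hY hb)

theorem posSemidef_of_tendsto {β : Type*} [Finite ι] {b : Filter β} [b.NeBot]
    {M : β → Matrix ι ι 𝕜} {M₀ : Matrix ι ι 𝕜} (hlim : Tendsto M b (𝓝 M₀))
    (hM : ∀ᶠ x in b, (M x).PosSemidef) : M₀.PosSemidef := by
  cases nonempty_fintype ι
  have hclosed : IsClosed {M : Matrix ι ι 𝕜 | M.PosSemidef} := by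
    simp only [posSemidef_iff_dotProduct_mulVec, Set.ofPred_and, Set.ofPred_forall]
    exact (isClosed_eq (by fun_prop) continuous_id).inter
      (isClosed_iInter fun x => isClosed_le continuous_const (by fun_prop))
  exact hclosed.mem_of_tendsto hlim hM

theorem posSemidef_single [DecidableEq ι] [Ring R] [PartialOrder R] [StarRing R]
    [StarOrderedRing R] (i : ι) {x : R} (hx : 0 ≤ x) : (single i i x).PosSemidef := by
  rw [← diagonal_single]
  exact PosSemidef.diagonal (Pi.single_nonneg.mpr hx)

end PosSemidef

section OrthonormalFrames

open scoped ComplexOrder MatrixOrder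

variable {ι 𝕜 R : Type*} [Fintype ι] [DecidableEq ι] [RCLike 𝕜] {D A : Matrix ι ι 𝕜}

theorem exists_conjTranspose_mul_mul_eq_one (hD : D.PosDef) :
    ∃ Q : Matrix ι ι 𝕜, Qᴴ * D * Q = 1 := by
  obtain ⟨B, hB, rfl⟩ :=
    CStarAlgebra.isStrictlyPositive_iff_eq_star_mul_self.mp (isStrictlyPositive_iff_posDef.mpr hD)
  obtain ⟨Q, hBQ, -⟩ := isUnit_iff_exists.mp hB
  refine ⟨Q, ?_⟩
  rw [star_eq_conjTranspose, ← Matrix.mul_assoc, ← conjTranspose_mul, Matrix.mul_assoc, hBQ]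
  simp

theorem exists_simultaneous_diagonalization (hD : D.PosDef) (hA : A.IsHermitian) :
    ∃ (P : Matrix ι ι 𝕜) (l : ι → ℝ),
      Pᴴ * D * P = 1 ∧ Pᴴ * A * P = diagonal fun i => (l i : 𝕜) := by
  obtain ⟨Q, hQ⟩ := exists_conjTranspose_mul_mul_eq_one hD
  have hB : (Qᴴ * A * Q).IsHermitian := isHermitian_conjTranspose_mul_mul Q hA
  let U : Matrix ι ι 𝕜 := hB.eigenvectorUnitary
  have hconj (M : Matrix ι ι 𝕜) : (Q * U)ᴴ * M * (Q * U) = star U * (Qᴴ * M * Q) * U := by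
    simp only [conjTranspose_mul, star_eq_conjTranspose, Matrix.mul_assoc]
  refine ⟨Q * U, hB.eigenvalues, ?_, ?_⟩
  · rw [hconj, hQ, mul_one, Unitary.coe_star_mul_self]
  · have hdiag := hB.conjStarAlgAut_star_eigenvectorUnitary
    rw [Unitary.conjStarAlgAut_star_apply] at hdiag
    exact (hconj A).trans hdiag

theorem exists_mem_unitaryGroup_eq_mul [CommRing R] [StarRing R] {D P Q : Matrix ι ι R}
    (hQ : Qᴴ * D * Q = 1) (hP : Pᴴ * D * P = 1) :
    ∃ U ∈ unitaryGroup ι R, P = Q * U := by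
  have hPQ : P = Q * (Q⁻¹ * P) :=
    (mul_nonsing_inv_cancel_left Q P (isUnit_det_of_left_inverse hQ)).symm
  refine ⟨Q⁻¹ * P, ?_, hPQ⟩
  rw [mem_unitaryGroup_iff', star_eq_conjTranspose]
  calc (Q⁻¹ * P)ᴴ * (Q⁻¹ * P) = (Q⁻¹ * P)ᴴ * (Qᴴ * D * Q) * (Q⁻¹ * P) := by rw [hQ, mul_one]
    _ = (Q * (Q⁻¹ * P))ᴴ * D * (Q * (Q⁻¹ * P)) := by
        simp only [conjTranspose_mul, Matrix.mul_assoc]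
    _ = 1 := by rw [← hPQ, hP]

end OrthonormalFrames

section Pencil

open scoped ComplexOrder

variable {ι : Type*} [Fintype ι] {D A : Matrix ι ι ℂ}

theorem re_dotProduct_add_I_smul_mulVec (hA : A.IsHermitian) (v : ι → ℂ) :
    (star v ⬝ᵥ (D + Complex.I • A) *ᵥ v).re = (star v ⬝ᵥ D *ᵥ v).re := by
  have him : (star v ⬝ᵥ A *ᵥ v).im = 0 := hA.im_star_dotProduct_mulVec_self v
  simp [add_mulVec, smul_mulVec, him]

theorem mulVec_eq_zero_of_add_I_smul_mulVec_eq_zero (hD : D.PosSemidef) (hA : A.IsHermitian)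
    {v : ι → ℂ} (hv : (D + Complex.I • A) *ᵥ v = 0) : D *ᵥ v = 0 ∧ A *ᵥ v = 0 := by
  have hre : (star v ⬝ᵥ D *ᵥ v).re = 0 := by
    rw [← re_dotProduct_add_I_smul_mulVec hA, hv, dotProduct_zero, Complex.zero_re]
  have hDv : D *ᵥ v = 0 := (hD.dotProduct_mulVec_zero_iff v).mp <|
    Complex.ext hre (hD.isHermitian.im_star_dotProduct_mulVec_self v)
  refine ⟨hDv, ?_⟩
  simpa [add_mulVec, smul_mulVec, hDv] using hv

variable [DecidableEq ι]

theorem det_add_I_smul_ne_zero (hD : D.PosDef) (hA : A.IsHermitian) :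
    (D + Complex.I • A).det ≠ 0 := fun h => by
  obtain ⟨v, hv, hv0⟩ := exists_mulVec_eq_zero_iff.mpr h
  have hDv := (mulVec_eq_zero_of_add_I_smul_mulVec_eq_zero hD.posSemidef hA hv0).1
  exact hv (mulVec_injective_of_isUnit hD.isUnit (by simp [hDv]))

theorem re_nonneg_of_mem_roots_charpoly_add_I_smul (hD : D.PosSemidef) (hA : A.IsHermitian) {z : ℂ}
    (hz : z ∈ (D + Complex.I • A).charpoly.roots) : 0 ≤ z.re := by
  have hspec : Module.End.HasEigenvalue (toLin' (D + Complex.I • A)) z := by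
    rw [Module.End.hasEigenvalue_iff_mem_spectrum, spectrum_toLin']
    exact mem_spectrum_iff_isRoot_charpoly.mpr (Polynomial.isRoot_of_mem_roots hz)
  obtain ⟨v, hv⟩ := hspec.exists_hasEigenvector
  have hMv : (D + Complex.I • A) *ᵥ v = z • v := hv.apply_eq_smul
  have hform := re_dotProduct_add_I_smul_mulVec (D := D) hA v
  have hnorm := Complex.pos_iff.mp (dotProduct_star_self_pos_iff.mpr hv.2)
  rw [hMv, dotProduct_smul, smul_eq_mul, Complex.mul_re, ← hnorm.2, mul_zero, sub_zero] at hform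
  exact nonneg_of_mul_nonneg_left (hform ▸ hD.re_dotProduct_nonneg v) hnorm.1

theorem mem_slitPlane_of_mem_roots_charpoly_add_I_smul (hD : D.PosSemidef) (hA : A.IsHermitian)
    (hdet : (D + Complex.I • A).det ≠ 0) {z : ℂ}
    (hz : z ∈ (D + Complex.I • A).charpoly.roots) : z ∈ Complex.slitPlane := by
  have hz0 : z ≠ 0 := fun h => zero_notMem_roots_charpoly hdet (h ▸ hz)
  rw [Complex.mem_slitPlane_iff]
  rcases (re_nonneg_of_mem_roots_charpoly_add_I_smul hD hA hz).lt_or_eq with hre | hre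
  · exact Or.inl hre
  · exact Or.inr fun him => hz0 (Complex.ext hre.symm him)

variable {P : Matrix ι ι ℂ} {l : ι → ℝ}

theorem coe_spectralAngle_add_I_smul (hD : D.PosDef) (hA : A.IsHermitian) (hP : Pᴴ * D * P = 1)
    (hl : Pᴴ * A * P = diagonal fun i => (l i : ℂ)) :
    (spectralAngle (D + Complex.I • A) : Real.Angle) = (∑ i, arctan (l i) : ℝ) := by
  have hdiag : Pᴴ * (D + Complex.I • A) * P = diagonal fun i => 1 + l i * Complex.I := by
    rw [Matrix.mul_add, Matrix.add_mul, hP, Matrix.mul_smul, Matrix.smul_mul, hl, ← diagonal_one,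
      ← diagonal_smul, diagonal_add]
    simp [mul_comm]
  have hdetP : P.det ≠ 0 := fun h => by simpa [h] using congrArg det hP
  have hdet : (D + Complex.I • A).det * (Complex.normSq P.det : ℝ) =
      ∏ i, (1 + l i * Complex.I) := by
    rw [← det_diagonal, ← hdiag, det_mul, det_mul, det_conjTranspose, ← Complex.mul_conj]
    simp only [Complex.star_def]
    ring
  rw [coe_spectralAngle (det_add_I_smul_ne_zero hD hA), coe_sum_arctan, ← hdet,
    Complex.arg_mul_real (Complex.normSq_pos.mpr hdetP)]

theorem spectralAngle_eq_zero_of_posSemidef (hD : D.PosSemidef) : spectralAngle D = 0 := by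
  rw [spectralAngle, hD.isHermitian.roots_charpoly_eq_eigenvalues, Multiset.map_map]
  refine Multiset.sum_eq_zero fun x hx => ?_
  obtain ⟨i, -, rfl⟩ := Multiset.mem_map.mp hx
  exact Complex.arg_ofReal_of_nonneg (hD.eigenvalues_nonneg i)

/-- Both sides are continuous lifts of `arg det (D + itA)` along `t • A` that agree at `t = 0`. -/
theorem spectralAngle_add_I_smul_eq_sum_arctan (hD : D.PosDef) (hA : A.IsHermitian)
    (hP : Pᴴ * D * P = 1) (hl : Pᴴ * A * P = diagonal fun i => (l i : ℂ)) :
    spectralAngle (D + Complex.I • A) = ∑ i, arctan (l i) := by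
  have htA (t : ℝ) : (t • A).IsHermitian := hA.smul (IsSelfAdjoint.all t)
  have htl (t : ℝ) : Pᴴ * (t • A) * P = diagonal fun i => ((t * l i : ℝ) : ℂ) := by
    rw [Matrix.mul_smul, Matrix.smul_mul, hl, ← diagonal_smul]
    congr 1; ext i; simp
  have hcont : Continuous fun t : ℝ => spectralAngle (D + Complex.I • t • A) := by
    refine continuous_iff_continuousAt.mpr fun t => ?_
    exact ContinuousAt.comp (g := spectralAngle) (continuousAt_spectralAngle fun z hz =>
      mem_slitPlane_of_mem_roots_charpoly_add_I_smul hD.posSemidef (htA t)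
        (det_add_I_smul_ne_zero hD (htA t)) hz) (by fun_prop)
  have hcont' : Continuous fun t : ℝ => ∑ i, arctan (t * l i) := by fun_prop
  have hlift : (fun t : ℝ => spectralAngle (D + Complex.I • t • A)) =
      fun t => ∑ i, arctan (t * l i) :=
    (AddCircle.isCoveringMap_coe (2 * π)).eq_of_comp_eq hcont hcont'
      (funext fun t => coe_spectralAngle_add_I_smul hD (htA t) hP (htl t)) 0
      (by simp [spectralAngle_eq_zero_of_posSemidef hD.posSemidef])
  simpa using congrFun hlift 1

end Pencil

section Concavity

open scoped ComplexOrder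

variable {ι : Type*} [Fintype ι] [DecidableEq ι]

theorem concaveOn_arctan : ConcaveOn ℝ (Set.Ici 0) arctan := by
  refine AntitoneOn.concaveOn_of_deriv (convex_Ici 0) continuous_arctan.continuousOn
    differentiable_arctan.differentiableOn fun x hx y _ hxy => ?_
  rw [interior_Ici, Set.mem_Ioi] at hx
  simp only [Real.deriv_arctan]
  gcongr

theorem sum_le_sum_mulVec_of_mem_doublyStochastic {f : ℝ → ℝ} {s : Set ℝ} (hf : ConcaveOn ℝ s f)
    {W : Matrix ι ι ℝ} (hW : W ∈ doublyStochastic ℝ ι) {l : ι → ℝ} (hl : ∀ j, l j ∈ s) :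
    ∑ j, f (l j) ≤ ∑ i, f ((W *ᵥ l) i) :=
  calc ∑ j, f (l j) = ∑ j, (∑ i, W i j) * f (l j) := by
        simp [sum_col_of_mem_doublyStochastic hW]
    _ = ∑ i, ∑ j, W i j • f (l j) := by
        simp only [Finset.sum_mul, smul_eq_mul]
        exact Finset.sum_comm
    _ ≤ ∑ i, f (∑ j, W i j • l j) := Finset.sum_le_sum fun i _ =>
        hf.le_map_sum (fun j _ => nonneg_of_mem_doublyStochastic hW)
          (sum_row_of_mem_doublyStochastic hW i) fun j _ => hl j
    _ = ∑ i, f ((W *ᵥ l) i) := rfl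

theorem map_normSq_mem_doublyStochastic {W : Matrix ι ι ℂ} (hW : W ∈ unitaryGroup ι ℂ) :
    W.map Complex.normSq ∈ doublyStochastic ℝ ι := by
  have hrow (i : ι) : ∑ j, Complex.normSq (W i j) = 1 := by
    have h := congrFun₂ (mem_unitaryGroup_iff.mp hW) i i
    simp only [mul_apply, star_apply, one_apply_eq, Complex.star_def, Complex.mul_conj] at h
    exact_mod_cast h
  have hcol (j : ι) : ∑ i, Complex.normSq (W i j) = 1 := by
    have h := congrFun₂ (mem_unitaryGroup_iff'.mp hW) j j
    simp only [mul_apply, star_apply, one_apply_eq, Complex.star_def,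
      ← Complex.normSq_eq_conj_mul_self] at h
    exact_mod_cast h
  exact mem_doublyStochastic_iff_sum.mpr ⟨fun i j => Complex.normSq_nonneg _, hrow, hcol⟩

theorem mul_diagonal_mul_conjTranspose_apply_self (W : Matrix ι ι ℂ) (l : ι → ℝ) (i : ι) :
    (W * diagonal (fun j => (l j : ℂ)) * Wᴴ) i i = ((W.map Complex.normSq *ᵥ l) i : ℝ) := by
  rw [mul_apply]
  simp only [mul_diagonal, conjTranspose_apply, mulVec, dotProduct, map_apply, Complex.ofReal_sum,
    Complex.ofReal_mul, ← Complex.mul_conj]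
  exact Finset.sum_congr rfl fun j _ => by simp only [Complex.star_def]; ring

variable {D X P : Matrix ι ι ℂ}

theorem spectralAngle_le_sum_arctan (hD : D.PosDef) (hX : X.PosSemidef) (hP : Pᴴ * D * P = 1) :
    spectralAngle (D + Complex.I • X) ≤ ∑ i, arctan ((Pᴴ * X * P) i i).re := by
  obtain ⟨Q, l, hQ, hl⟩ := exists_simultaneous_diagonalization hD hX.isHermitian
  have hl0 : ∀ j, l j ∈ Set.Ici (0 : ℝ) := fun j => by
    have hdiag := hl ▸ hX.conjTranspose_mul_mul_same Q
    exact Complex.zero_le_real.mp (posSemidef_diagonal_iff.mp hdiag j)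
  obtain ⟨U, hU, rfl⟩ := exists_mem_unitaryGroup_eq_mul hQ hP
  have hUX : (Q * U)ᴴ * X * (Q * U) = Uᴴ * diagonal (fun j => (l j : ℂ)) * Uᴴᴴ := by
    rw [conjTranspose_conjTranspose, ← RCLike.ofReal_eq_complex_ofReal, ← hl]
    simp only [conjTranspose_mul, Matrix.mul_assoc]
  calc spectralAngle (D + Complex.I • X) = ∑ j, arctan (l j) :=
        spectralAngle_add_I_smul_eq_sum_arctan hD hX.isHermitian hQ hl
    _ ≤ ∑ i, arctan ((Uᴴ.map Complex.normSq *ᵥ l) i) :=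
        sum_le_sum_mulVec_of_mem_doublyStochastic concaveOn_arctan
          (map_normSq_mem_doublyStochastic (Unitary.star_mem hU)) hl0
    _ = ∑ i, arctan (((Q * U)ᴴ * X * (Q * U)) i i).re := by
        simp only [hUX, mul_diagonal_mul_conjTranspose_apply_self, Complex.ofReal_re]

theorem concaveOn_spectralAngle (hD : D.PosDef) :
    ConcaveOn ℝ {X : Matrix ι ι ℂ | X.PosSemidef} fun X => spectralAngle (D + Complex.I • X) := by
  refine ⟨convex_setOf_posSemidef, fun X hX Y hY a b ha hb hab => ?_⟩
  have hZ : (a • X + b • Y).PosSemidef := convex_setOf_posSemidef hX hY ha hb hab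
  obtain ⟨P, l, hP, hl⟩ := exists_simultaneous_diagonalization hD hZ.isHermitian
  have hdiag {M : Matrix ι ι ℂ} (hM : M.PosSemidef) (i : ι) :
      ((Pᴴ * M * P) i i).re ∈ Set.Ici (0 : ℝ) :=
    (Complex.nonneg_iff.mp (hM.conjTranspose_mul_mul_same P).diag_nonneg).1
  have hli (i : ι) : l i = a • ((Pᴴ * X * P) i i).re + b • ((Pᴴ * Y * P) i i).re := by
    have h := congrArg Complex.re (congrFun₂ hl i i)
    simpa [Matrix.mul_add, Matrix.add_mul] using h.symm
  calc a • spectralAngle (D + Complex.I • X) + b • spectralAngle (D + Complex.I • Y)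
      ≤ a • ∑ i, arctan ((Pᴴ * X * P) i i).re + b • ∑ i, arctan ((Pᴴ * Y * P) i i).re := by
        gcongr
        · exact spectralAngle_le_sum_arctan hD hX hP
        · exact spectralAngle_le_sum_arctan hD hY hP
    _ = ∑ i, (a • arctan ((Pᴴ * X * P) i i).re + b • arctan ((Pᴴ * Y * P) i i).re) := by
        rw [Finset.smul_sum, Finset.smul_sum, Finset.sum_add_distrib]
    _ ≤ ∑ i, arctan (l i) := Finset.sum_le_sum fun i _ =>
        hli i ▸ concaveOn_arctan.2 (hdiag hX i) (hdiag hY i) ha hb hab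
    _ = spectralAngle (D + Complex.I • (a • X + b • Y)) :=
        (spectralAngle_add_I_smul_eq_sum_arctan hD hZ.isHermitian hP hl).symm

theorem posSemidef_sub_smul_of_le_spectralAngle (hD : D.PosDef) {A : Matrix ι ι ℂ}
    (hA : A.IsHermitian) {τ : ℝ}
    (hτ : (Fintype.card ι - 1) * (π / 2) + arctan τ ≤ spectralAngle (D + Complex.I • A)) :
    (A - τ • D).PosSemidef := by
  obtain ⟨P, l, hP, hl⟩ := exists_simultaneous_diagonalization hD hA
  rw [spectralAngle_add_I_smul_eq_sum_arctan (l := l) hD hA hP hl] at hτ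
  have hl_le (i : ι) : τ ≤ l i := by
    have hrest : ∑ j ∈ Finset.univ.erase i, arctan (l j) ≤ (Fintype.card ι - 1) * (π / 2) := by
      have h := Finset.sum_le_card_nsmul (Finset.univ.erase i) _ _
        fun j _ => (arctan_lt_pi_div_two (l j)).le
      rwa [Finset.card_erase_of_mem (Finset.mem_univ i), Finset.card_univ, nsmul_eq_mul,
        Nat.cast_pred (Fintype.card_pos_iff.mpr ⟨i⟩)] at h
    rw [← Finset.add_sum_erase _ _ (Finset.mem_univ i)] at hτ
    exact arctan_strictMono.le_iff_le.mp (by linarith)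
  have hconj : Pᴴ * (A - τ • D) * P = diagonal fun i => ((l i - τ : ℝ) : ℂ) := by
    rw [Matrix.mul_sub, Matrix.sub_mul, hl, Matrix.mul_smul, Matrix.smul_mul, hP, ← diagonal_one,
      ← diagonal_smul, diagonal_sub]
    simp
  have hPu : IsUnit P := (isUnit_iff_isUnit_det P).mpr (isUnit_det_of_left_inverse hP)
  rw [← hPu.posSemidef_star_left_conjugate_iff, star_eq_conjTranspose, hconj,
    posSemidef_diagonal_iff]
  exact fun i => Complex.zero_le_real.mpr (sub_nonneg.mpr (hl_le i))

end Concavity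

section CornerPerturbation

open Polynomial

variable {ι R : Type*} [Fintype ι] [DecidableEq ι]

theorem X_mul_charpoly_add_single [CommRing R] {M : Matrix ι ι R} {i : ι} (hM : M.row i = 0)
    (z : R) : X * (M + single i i z).charpoly = (X - C z) * M.charpoly := by
  have hrow (w : R) : charmatrix (M + single i i w) =
      updateRow (charmatrix M) i ((X - C w) • Pi.single i 1) := by
    ext j k : 1
    rcases eq_or_ne j i with rfl | hj
    · have hMk : M j k = 0 := congrFun hM k
      rcases eq_or_ne k j with rfl | hk
      · simp [hMk]
      · simp [hMk, hk, hk.symm]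
    · simp [charmatrix_apply, hj, hj.symm]
  have hdet (w : R) : (M + single i i w).charpoly =
      (X - C w) * (updateRow (charmatrix M) i (Pi.single i 1)).det := by
    rw [Matrix.charpoly, hrow, det_updateRow_smul]
  have hdet₀ := hdet 0
  rw [single_zero, add_zero, C_0, sub_zero] at hdet₀
  rw [hdet, hdet₀]
  ring

theorem spectralAngle_add_single {M : Matrix ι ι ℂ} {i : ι} (hM : M.row i = 0) (z : ℂ) :
    spectralAngle (M + single i i z) = z.arg + spectralAngle M := by
  have hroots := congrArg roots (X_mul_charpoly_add_single hM z)
  rw [roots_mul (mul_ne_zero X_ne_zero (charpoly_monic _).ne_zero),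
    roots_mul (mul_ne_zero (X_sub_C_ne_zero z) (charpoly_monic _).ne_zero), roots_X,
    roots_X_sub_C] at hroots
  simpa [spectralAngle] using congrArg (fun s => (s.map Complex.arg).sum) hroots

end CornerPerturbation

section SpaceTimeAngle

open scoped ComplexOrder Topology

@[fun_prop]
theorem continuous_single_comp {X ι κ R : Type*} [TopologicalSpace X] [TopologicalSpace R] [Zero R]
    [DecidableEq ι] [DecidableEq κ] {i : ι} {j : κ} {f : X → R} (hf : Continuous f) :
    Continuous fun x => single i j (f x) :=
  continuous_matrix fun _ _ => by simp only [single_apply]; split_ifs <;> fun_prop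

theorem isHermitian_map_ofReal_iff {ι : Type*} {A : Matrix ι ι ℝ} :
    (A.map Complex.ofReal).IsHermitian ↔ A.IsSymm := by
  simp [IsHermitian.ext_iff, IsSymm.ext_iff]

variable {n : ℕ} {A : Matrix (Fin (n + 1)) (Fin (n + 1)) ℝ}

theorem spaceTimeAngle_eq_add_spectralAngle : spaceTimeAngle A =
    (if (cmat A).det = 0 then π / 2 else 0) + spectralAngle (cmat A) := by
  have hfilter (s : Multiset ℂ) [DecidablePred fun z : ℂ => z ≠ 0] :
      ((s.filter fun z => z ≠ 0).map Complex.arg).sum = (s.map Complex.arg).sum := by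
    induction s using Multiset.induction_on with
    | empty => simp
    | cons z s ih => by_cases hz : z = 0 <;> simp [hz, ih]
  rw [spaceTimeAngle, spectralAngle]
  split_ifs
  · rw [hfilter]
  · rw [zero_add]

theorem posSemidef_Inmat : (Inmat n).PosSemidef :=
  PosSemidef.diagonal fun i => by dsimp only; split_ifs <;> simp

theorem row_zero_cmat_eq_zero (hA : A.IsSymm) (hdet : (cmat A).det = 0) : (cmat A).row 0 = 0 := by
  obtain ⟨v, hv, hv0⟩ := exists_mulVec_eq_zero_iff.mpr hdet
  obtain ⟨hIv, hAv⟩ := mulVec_eq_zero_of_add_I_smul_mulVec_eq_zero posSemidef_Inmat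
    (isHermitian_map_ofReal_iff.mpr hA) hv0
  have hvi (i : Fin (n + 1)) (hi : i ≠ 0) : v i = 0 := by
    simpa [Inmat, mulVec_diagonal, hi] using congrFun hIv i
  have hv' : v = Pi.single 0 (v 0) := by
    ext i
    rcases eq_or_ne i 0 with rfl | hi <;> simp [*]
  have hv0' : v 0 ≠ 0 := fun h => hv (by rw [hv', h, Pi.single_zero])
  have hcol (i : Fin (n + 1)) : A i 0 = 0 := by
    rw [hv'] at hAv
    simpa [hv0'] using congrFun hAv i
  ext i
  have h0i : A 0 i = 0 := by rw [← hA.apply, hcol]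
  rcases eq_or_ne i 0 with rfl | hi
  · simp [cmat, Inmat, h0i]
  · simp [cmat, Inmat, h0i, hi.symm]

theorem cmat_add_single (A : Matrix (Fin (n + 1)) (Fin (n + 1)) ℝ) (s : ℝ) :
    cmat A + single 0 0 ((s : ℂ) ^ 2 + s * Complex.I) =
      (Inmat n + single 0 0 ((s : ℂ) ^ 2)) +
        Complex.I • (A.map Complex.ofReal + single 0 0 (s : ℂ)) := by
  rw [cmat, single_add, smul_add, smul_single, smul_eq_mul, mul_comm Complex.I]
  exact add_add_add_comm _ _ _ _

theorem posDef_Inmat_add_single {s : ℝ} (hs : 0 < s) :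
    (Inmat n + single 0 0 ((s : ℂ) ^ 2)).PosDef := by
  rw [Inmat, ← diagonal_single, diagonal_add, posDef_diagonal_iff]
  intro i
  rcases eq_or_ne i 0 with rfl | hi
  · simpa using Complex.zero_lt_real.mpr (pow_pos hs 2)
  · simp [hi]

theorem tendsto_arg_sq_add_mul_I :
    Tendsto (fun s : ℝ => ((s : ℂ) ^ 2 + s * Complex.I).arg) (𝓝[>] 0) (𝓝 (π / 2)) := by
  have hcont : ContinuousAt (fun s : ℝ => ((s : ℂ) + Complex.I).arg) 0 :=
    ContinuousAt.comp (g := Complex.arg) (Complex.continuousAt_arg (by simp [Complex.slitPlane]))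
      (by fun_prop)
  have hlim : Tendsto (fun s : ℝ => ((s : ℂ) + Complex.I).arg) (𝓝[>] 0) (𝓝 (π / 2)) := by
    simpa using hcont.tendsto.mono_left nhdsWithin_le_nhds
  refine hlim.congr' ?_
  filter_upwards [self_mem_nhdsWithin] with s hs
  rw [← Complex.arg_real_mul _ hs]
  ring_nf

theorem tendsto_spectralAngle_cmat_add_single (hA : A.IsSymm) :
    Tendsto (fun s : ℝ => spectralAngle (cmat A + single 0 0 ((s : ℂ) ^ 2 + s * Complex.I)))
      (𝓝[>] 0) (𝓝 (spaceTimeAngle A)) := by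
  rw [spaceTimeAngle_eq_add_spectralAngle]
  split_ifs with hdet
  · simp only [spectralAngle_add_single (row_zero_cmat_eq_zero hA hdet)]
    exact tendsto_arg_sq_add_mul_I.add_const _
  · have hcont : ContinuousAt spectralAngle (cmat A) := continuousAt_spectralAngle fun z hz =>
      mem_slitPlane_of_mem_roots_charpoly_add_I_smul posSemidef_Inmat
        (isHermitian_map_ofReal_iff.mpr hA) hdet hz
    have hpath : Continuous fun s : ℝ =>
        cmat A + single 0 0 ((s : ℂ) ^ 2 + s * Complex.I) := by fun_prop
    rw [zero_add]
    exact hcont.tendsto.comp ((hpath.tendsto' 0 _ (by simp)).mono_left nhdsWithin_le_nhds)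

theorem posSemidef_map_ofReal_of_le_spaceTimeAngle (hA : A.IsSymm)
    (hn : n * (π / 2) ≤ spaceTimeAngle A) : (A.map Complex.ofReal).PosSemidef := by
  have hsub (τ : ℝ) (hτ : τ < 0) : (A.map Complex.ofReal - τ • Inmat n).PosSemidef := by
    have hlim : Tendsto (fun s : ℝ => A.map Complex.ofReal + single 0 0 (s : ℂ) -
        τ • (Inmat n + single 0 0 ((s : ℂ) ^ 2))) (𝓝[>] 0)
        (𝓝 (A.map Complex.ofReal - τ • Inmat n)) :=
      (Continuous.tendsto' (by fun_prop) _ _ (by simp)).mono_left nhdsWithin_le_nhds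
    have hlt : n * (π / 2) + arctan τ < spaceTimeAngle A := by
      have := arctan_lt_zero.mpr hτ
      linarith
    refine posSemidef_of_tendsto hlim ?_
    filter_upwards [(tendsto_spectralAngle_cmat_add_single hA).eventually_const_lt hlt,
      self_mem_nhdsWithin] with s hangle hs
    rw [cmat_add_single] at hangle
    exact posSemidef_sub_smul_of_le_spectralAngle (posDef_Inmat_add_single hs)
      ((isHermitian_map_ofReal_iff.mpr hA).add (posSemidef_single 0
        (Complex.zero_le_real.mpr (le_of_lt hs))).isHermitian)
      (by simpa using hangle.le)
  have hlim : Tendsto (fun τ : ℝ => A.map Complex.ofReal - τ • Inmat n) (𝓝[<] 0)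
      (𝓝 (A.map Complex.ofReal)) :=
    (Continuous.tendsto' (by fun_prop) _ _ (by simp)).mono_left nhdsWithin_le_nhds
  exact posSemidef_of_tendsto hlim (eventually_mem_nhdsWithin.mono hsub)

theorem convex_setOf_posSemidef_map_ofReal {ι : Type*} :
    Convex ℝ {A : Matrix ι ι ℝ | (A.map Complex.ofReal).PosSemidef} :=
  (convex_setOf_posSemidef (𝕜 := ℂ)).linear_preimage Complex.ofRealCLM.toLinearMap.mapMatrix

theorem concaveOn_spaceTimeAngle : ConcaveOn ℝ
    {A : Matrix (Fin (n + 1)) (Fin (n + 1)) ℝ | (A.map Complex.ofReal).PosSemidef}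
    spaceTimeAngle := by
  refine ⟨convex_setOf_posSemidef_map_ofReal, fun A hA B hB a b ha hb hab => ?_⟩
  have hlim {M : Matrix (Fin (n + 1)) (Fin (n + 1)) ℝ} (hM : (M.map Complex.ofReal).PosSemidef) :=
    tendsto_spectralAngle_cmat_add_single (isHermitian_map_ofReal_iff.mp hM.isHermitian)
  refine le_of_tendsto_of_tendsto (((hlim hA).const_smul a).add ((hlim hB).const_smul b))
    (hlim (convex_setOf_posSemidef_map_ofReal hA hB ha hb hab)) ?_
  filter_upwards [self_mem_nhdsWithin] with s hs
  have hE := posSemidef_single (0 : Fin (n + 1)) (Complex.zero_le_real.mpr (le_of_lt hs))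
  have hcomb : (a • A + b • B).map Complex.ofReal + single 0 0 (s : ℂ) =
      a • (A.map Complex.ofReal + single 0 0 (s : ℂ)) +
        b • (B.map Complex.ofReal + single 0 0 (s : ℂ)) := by
    rw [smul_add, smul_add, add_add_add_comm, ← add_smul, hab, one_smul]
    congr 1
    ext i j
    simp
  simp only [cmat_add_single, hcomb]
  exact (concaveOn_spectralAngle (posDef_Inmat_add_single hs)).2 (hA.add hE) (hB.add hE) ha hb hab

theorem calF_eq_sep_posSemidef {c : ℝ} (hc : n * π / 2 ≤ c) :
    calF n c = {A ∈ {A | (A.map Complex.ofReal).PosSemidef} | c ≤ spaceTimeAngle A} := by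
  ext A
  constructor
  · rintro ⟨hA, hcA⟩
    exact ⟨posSemidef_map_ofReal_of_le_spaceTimeAngle hA (by linarith), hcA⟩
  · rintro ⟨hA, hcA⟩
    exact ⟨isHermitian_map_ofReal_iff.mp hA.isHermitian, hcA⟩

end SpaceTimeAngle

/-- For every `c ∈ [nπ/2, (n+1)π/2)` the set `ℱ_c ⊂ Sym(ℝ^{n+1})` is convex. -/
theorem calF_convex (n : ℕ) (c : ℝ)
    (hc : (n : ℝ) * π / 2 ≤ c) (hc' : c < ((n : ℝ) + 1) * π / 2) :
    Convex ℝ (calF n c) := by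
  rw [calF_eq_sep_posSemidef hc]
  exact concaveOn_spaceTimeAngle.convex_ge c
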